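/- Let h be an integer, r ≥ 1, and α_1, …, α_r positive integers, with jα_l + h - l + 1 ≠ 0 for all 0 ≤ j ≤ n and 1 ≤ l ≤ r. For real q with 0 < q < 1 define β_n^{(h,r)}(w, q | α_1,…,α_r) = (1/(1-q)^n) Σ_{j=0}^{n} C(n,j)(-q^w)^j ∏_{l=1}^{r} (jα_l + h - l + 1)/[jα_l + h - l + 1], where [m] = (1-q^m)/(1-q). Then for every natural number w, lim_{q→1⁻} β_n^{(h,r)}(w, q | α_1,…,α_r) = B_n^{(r)}(w | α_1,…,α_r), the Barnes multiple Bernoulli polynomial defined by (∏_{j=1}^{r} α_j t/(e^{α_j t} - 1)) e^{wt} = Σ_{n≥0} B_n^{(r)}(w | α) t^n/n!. -/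

import Mathlib

open Finset Real Filter

/-- q-integer `[m] = (1-q^m)/(1-q)` for an integer exponent. -/
noncomputable def qint (q : ℝ) (m : ℤ) : ℝ := (1 - q ^ m) / (1 - q)

/-- The extended Changhee q-Bernoulli polynomial `β_n^{(h,r)}(w, q | α_1,…,α_r)`,
with the weights indexed by `l ∈ {0,…,r-1}` representing `α_{l+1}`. -/
noncomputable def changheeBetaPoly (q : ℝ) (h : ℤ) (r : ℕ) (α : ℕ → ℤ) (w : ℕ) (n : ℕ) : ℝ :=
  (1 / (1 - q) ^ n) *
    ∑ j ∈ Finset.range (n + 1),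
      (n.choose j : ℝ) * (-(q ^ w)) ^ j *
        ∏ l ∈ Finset.range r,
          (((j : ℤ) * α l + h - l : ℤ) : ℝ) / qint q ((j : ℤ) * α l + h - l)

open Polynomial Topology Asymptotics

/-- `f` has the Taylor expansion with coefficients `c` up to order `N` at `0`. -/
def TE (N : ℕ) (f : ℝ → ℝ) (c : ℕ → ℝ) : Prop :=
  ∃ p : ℝ[X], (fun s => f s - p.eval s) =O[𝓝 0] (fun s : ℝ => s ^ N) ∧ ∀ k < N, p.coeff k = c k

lemma poly_isBigO_one (p : ℝ[X]) : (fun s => p.eval s) =O[𝓝 0] (fun _ : ℝ => (1 : ℝ)) :=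
  p.continuous.continuousAt.isBigO_one ℝ

lemma TE.mul {N : ℕ} {f g : ℝ → ℝ} {c d : ℕ → ℝ} (hf : TE N f c) (hg : TE N g d) :
    TE N (fun s => f s * g s) (fun k => ∑ x ∈ antidiagonal k, c x.1 * d x.2) := by
  obtain ⟨p, hp, hpc⟩ := hf
  obtain ⟨q, hq, hqc⟩ := hg
  refine ⟨p * q, ?_, ?_⟩
  · have hN : (fun s : ℝ => s ^ N) =O[𝓝 0] (fun _ : ℝ => (1 : ℝ)) :=
      (continuous_pow N).continuousAt.isBigO_one ℝ
    have h1 := (poly_isBigO_one p).mul hq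
    have h2 := (poly_isBigO_one q).mul hp
    have h3 := hp.mul (hq.trans hN)
    simp only [one_mul, mul_one] at h1 h2 h3
    refine ((h1.add h2).add h3).congr_left fun s => ?_
    simp only [eval_mul]; ring
  · intro k hk
    rw [coeff_mul]
    refine Finset.sum_congr rfl fun x hx => ?_
    have := mem_antidiagonal.1 hx
    rw [hpc _ (by omega), hqc _ (by omega)]

lemma TE.sum {N : ℕ} {ι : Type*} (S : Finset ι) (a : ι → ℝ) {f : ι → ℝ → ℝ} {c : ι → ℕ → ℝ}
    (hf : ∀ i, TE N (f i) (c i)) :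
    TE N (fun s => ∑ i ∈ S, a i * f i s) (fun k => ∑ i ∈ S, a i * c i k) := by
  choose p hp hpc using hf
  refine ⟨∑ i ∈ S, C (a i) * p i, ?_, ?_⟩
  · have : (fun s => ∑ i ∈ S, a i * (f i s - (p i).eval s)) =O[𝓝 0] (fun s : ℝ => s ^ N) :=
      IsBigO.fun_sum fun i _ => (hp i).const_mul_left (a i)
    refine this.congr_left fun s => ?_
    simp [eval_finsetSum, mul_sub, Finset.sum_sub_distrib]
  · intro k hk
    simp only [finsetSum_coeff, coeff_C_mul]
    exact Finset.sum_congr rfl fun i _ => by rw [hpc i k hk]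

lemma TE.sub {N : ℕ} {f g : ℝ → ℝ} {c d : ℕ → ℝ} (hf : TE N f c) (hg : TE N g d) :
    TE N (fun s => f s - g s) (fun k => c k - d k) := by
  obtain ⟨p, hp, hpc⟩ := hf
  obtain ⟨q, hq, hqc⟩ := hg
  refine ⟨p - q, (hp.sub hq).congr_left fun s => ?_, fun k hk => ?_⟩
  · simp only [eval_sub]; ring
  · rw [coeff_sub, hpc k hk, hqc k hk]

lemma TE.comp_mul {N : ℕ} {f : ℝ → ℝ} {c : ℕ → ℝ} (hf : TE N f c) (b : ℝ) :
    TE N (fun s => f (b * s)) (fun k => c k * b ^ k) := by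
  obtain ⟨p, hp, hpc⟩ := hf
  refine ⟨p.comp (C b * X), ?_, fun k hk => ?_⟩
  · have ht : Tendsto (fun s : ℝ => b * s) (𝓝 0) (𝓝 0) := by
      have : Continuous (fun s : ℝ => b * s) := by fun_prop
      simpa using this.tendsto 0
    have h1 := hp.comp_tendsto ht
    have h2 : (fun s : ℝ => (b * s) ^ N) =O[𝓝 0] (fun s : ℝ => s ^ N) := by
      simp only [mul_pow]
      exact (isBigO_refl _ _).const_mul_left _
    refine (h1.trans h2).congr_left fun s => ?_
    simp [eval_comp]
  · rw [comp_C_mul_X_coeff, hpc k hk]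

lemma TE.tendsto {N m : ℕ} {f : ℝ → ℝ} {c : ℕ → ℝ} (hf : TE N f c) (hm : m < N)
    (h0 : ∀ k < m, c k = 0) : Tendsto (fun s => f s / s ^ m) (𝓝[≠] 0) (𝓝 (c m)) := by
  obtain ⟨p, hp, hpc⟩ := hf
  have hd : (X ^ m : ℝ[X]) ∣ p := X_pow_dvd_iff.2 fun k hk => by rw [hpc k (by omega), h0 k hk]
  obtain ⟨u, rfl⟩ := hd
  have hu : u.eval 0 = c m := by
    rw [← hpc m hm, ← coeff_zero_eq_eval_zero]
    simpa using (coeff_X_pow_mul u m 0).symm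
  have h1 : Tendsto (fun s => u.eval s) (𝓝[≠] 0) (𝓝 (c m)) := by
    rw [← hu]; exact u.continuous.continuousAt.tendsto.mono_left nhdsWithin_le_nhds
  have h2 : Tendsto (fun s => (f s - (X ^ m * u).eval s) / s ^ m) (𝓝[≠] 0) (𝓝 0) :=
    ((hp.trans_isLittleO (isLittleO_pow_pow hm)).mono nhdsWithin_le_nhds).tendsto_div_nhds_zero
  have h3 := h2.add h1
  rw [zero_add] at h3
  refine h3.congr' ?_
  filter_upwards [self_mem_nhdsWithin] with s hs
  have hs : s ≠ 0 := hs
  simp only [eval_mul, eval_pow, eval_X]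
  field_simp
  ring

lemma TE.unique {N : ℕ} {f g : ℝ → ℝ} {c d : ℕ → ℝ} (hf : TE N f c) (hg : TE N g d)
    (hfg : ∀ᶠ s in 𝓝[≠] 0, f s = g s) : ∀ k < N, c k = d k := by
  intro k
  induction k using Nat.strong_induction_on with
  | _ k ih =>
    intro hk
    have h1 := (hf.sub hg).tendsto hk fun i hi => sub_eq_zero.2 (ih i hi (by omega))
    have h2 : Tendsto (fun s => (f s - g s) / s ^ k) (𝓝[≠] 0) (𝓝 0) := by
      refine tendsto_const_nhds.congr' ?_
      filter_upwards [hfg] with s hs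
      simp [hs]
    exact sub_eq_zero.1 (tendsto_nhds_unique h1 h2)

lemma TE_of_hasSum (N : ℕ) {f : ℝ → ℝ} {c : ℕ → ℝ}
    (h : ∀ᶠ z in 𝓝 (0 : ℝ), HasSum (fun k => z ^ k * c k) (f z)) : TE N f c := by
  have h1 : HasFPowerSeriesAt f (FormalMultilinearSeries.ofScalars ℝ c) 0 := by
    rw [hasFPowerSeriesAt_iff]
    filter_upwards [h] with z hz
    simpa [FormalMultilinearSeries.coeff_ofScalars] using hz
  have h2 := h1.isBigO_sub_partialSum_pow N
  refine ⟨∑ k ∈ range N, C (c k) * X ^ k, ?_, fun k hk => ?_⟩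
  · have h3 : (fun y : ℝ => ‖y‖ ^ N) =O[𝓝 0] (fun s : ℝ => s ^ N) := by
      refine IsBigO.of_bound 1 (Eventually.of_forall fun y => ?_)
      simp
    refine (h2.trans h3).congr_left fun s => ?_
    simp [FormalMultilinearSeries.partialSum, eval_finsetSum]
    exact Finset.sum_congr rfl fun k _ => mul_comm _ _
  · simp [coeff_X_pow, hk]

lemma TE_of_analytic (N : ℕ) {f : ℝ → ℝ} (hf : AnalyticAt ℝ f 0) : ∃ c, TE N f c := by
  obtain ⟨p, hp⟩ := hf
  refine ⟨p.coeff, TE_of_hasSum N ?_⟩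
  simpa [hasFPowerSeriesAt_iff] using hp

/-- `x / (exp x - 1)` with the value `1` at `0`. -/
noncomputable def phi (x : ℝ) : ℝ := (dslope Real.exp 0 x)⁻¹

lemma phi_of_ne {x : ℝ} (hx : x ≠ 0) : phi x = x / (Real.exp x - 1) := by
  rw [phi, dslope_of_ne _ hx, slope_def_field]
  simp

lemma analyticAt_phi : AnalyticAt ℝ phi 0 := by
  obtain ⟨p, hp⟩ : AnalyticAt ℝ Real.exp 0 := analyticAt_rexp
  have : AnalyticAt ℝ (dslope Real.exp 0) 0 := ⟨_, hp.has_fpower_series_dslope_fslope⟩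
  exact this.inv (by simp)

/-- Family of expansions with polynomial coefficients. -/
def Fam (N : ℕ) (g : ℕ → ℝ → ℝ) (g0 : ℝ → ℝ) (P : ℕ → ℝ[X]) : Prop :=
  (∀ k, (P k).natDegree ≤ k) ∧ (∀ j : ℕ, TE N (g j) (fun k => (P k).eval (j : ℝ))) ∧
    TE N g0 (fun k => (P k).coeff k)

lemma Fam.mul {N : ℕ} {g h : ℕ → ℝ → ℝ} {g0 h0 : ℝ → ℝ} {P Q : ℕ → ℝ[X]}
    (hg : Fam N g g0 P) (hh : Fam N h h0 Q) :
    Fam N (fun j s => g j s * h j s) (fun s => g0 s * h0 s)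
      (fun k => ∑ x ∈ antidiagonal k, P x.1 * Q x.2) := by
  obtain ⟨a1, a2, a3⟩ := hg
  obtain ⟨b1, b2, b3⟩ := hh
  refine ⟨fun k => ?_, fun j => ?_, ?_⟩
  · refine natDegree_sum_le_of_forall_le _ _ fun x hx => ?_
    have := mem_antidiagonal.1 hx
    rw [← this]
    exact natDegree_mul_le_of_le (a1 _) (b1 _)
  · simpa [eval_finsetSum] using (a2 j).mul (b2 j)
  · convert a3.mul b3 using 2 with k
    rw [finsetSum_coeff]
    refine Finset.sum_congr rfl fun x hx => ?_
    rw [← mem_antidiagonal.1 hx]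
    exact coeff_mul_add_eq_of_natDegree_le (a1 _) (b1 _)

lemma Fam.comp {N : ℕ} {f : ℝ → ℝ} {c : ℕ → ℝ} (hf : TE N f c) (a b : ℝ) :
    Fam N (fun j s => f ((j * a + b) * s)) (fun s => f (a * s))
      (fun k => C (c k) * (C a * X + C b) ^ k) := by
  refine ⟨fun k => ?_, fun j => ?_, ?_⟩
  · refine (natDegree_C_mul_le _ _).trans ?_
    simpa using natDegree_pow_le_of_le k (natDegree_linear_le (a := a) (b := b))
  · convert hf.comp_mul (j * a + b) using 2 with k
    simp only [eval_mul, eval_pow, eval_add, eval_C, eval_X]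
    rw [mul_comm a]
  · convert hf.comp_mul a using 2 with k
    rw [coeff_C_mul]
    have := coeff_pow_of_natDegree_le (natDegree_linear_le (a := a) (b := b)) (m := k)
    simp at this
    rw [this]

lemma Fam.prod {N : ℕ} (r : ℕ) {f e : ℝ → ℝ} {c d : ℕ → ℝ} (hf : TE N f c) (he : TE N e d)
    (w : ℝ) (a b : ℕ → ℝ) :
    ∃ P, Fam N (fun j s => e ((j * w + 0) * s) * ∏ l ∈ range r, f ((j * a l + b l) * s))
      (fun s => e (w * s) * ∏ l ∈ range r, f (a l * s)) P := by
  induction r with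
  | zero => exact ⟨_, by simpa using Fam.comp he w 0⟩
  | succ r ih =>
    obtain ⟨P, hP⟩ := ih
    exact ⟨_, by simpa [prod_range_succ, mul_assoc] using hP.mul (Fam.comp hf (a r) (b r))⟩

lemma diff_lt {n : ℕ} {P : ℝ[X]} (hP : P.natDegree < n) :
    ∑ j ∈ range (n + 1), ((-1 : ℝ) ^ (n - j) * n.choose j) * P.eval (j : ℝ) = 0 := by
  have := congrFun (Polynomial.fwdDiff_iter_eq_zero_of_degree_lt hP) 0
  rw [fwdDiff_iter_eq_sum_shift] at this
  simpa using this

lemma diff_eq {n : ℕ} {P : ℝ[X]} (hP : P.natDegree ≤ n) :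
    ∑ j ∈ range (n + 1), ((-1 : ℝ) ^ (n - j) * n.choose j) * P.eval (j : ℝ)
      = P.coeff n * n.factorial := by
  rcases hP.lt_or_eq with h | h
  · rw [diff_lt h, coeff_eq_zero_of_natDegree_lt h, zero_mul]
  · have := congrFun (Polynomial.fwdDiff_iter_degree_eq_factorial P) 0
    rw [fwdDiff_iter_eq_sum_shift] at this
    subst h
    simpa using this

lemma changhee_exp (h : ℤ) (r : ℕ) (α : ℕ → ℤ) (n : ℕ)
    (hnz : ∀ j : ℕ, j ≤ n → ∀ l ∈ Finset.range r, (j : ℤ) * α l + h - l ≠ 0) (w : ℕ)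
    {s : ℝ} (hs : s ≠ 0) :
    changheeBetaPoly (Real.exp s) h r α w n =
      ((Real.exp s - 1) / s) ^ r / ((Real.exp s - 1) / s) ^ n *
      ((∑ j ∈ range (n + 1), ((-1 : ℝ) ^ (n - j) * n.choose j) *
        (Real.exp ((j * w + 0) * s) *
          ∏ l ∈ range r, phi ((j * (α l : ℝ) + ((h : ℝ) - l)) * s))) / s ^ n) := by
  have he : Real.exp s - 1 ≠ 0 := by
    rw [sub_ne_zero]; simpa using hs
  obtain ⟨κ, hκ⟩ : ∃ κ, κ = (Real.exp s - 1) / s := ⟨_, rfl⟩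
  have hκ0 : κ ≠ 0 := by rw [hκ]; exact div_ne_zero he hs
  have h1 : 1 - Real.exp s = -(κ * s) := by rw [hκ]; field_simp; ring
  rw [changheeBetaPoly, ← hκ, h1]
  have hterm : ∀ j ∈ range (n + 1), (n.choose j : ℝ) * (-(Real.exp s ^ w)) ^ j *
        ∏ l ∈ Finset.range r,
          (((j : ℤ) * α l + h - l : ℤ) : ℝ) / qint (Real.exp s) ((j : ℤ) * α l + h - l)
      = (-1) ^ n * κ ^ r * (((-1 : ℝ) ^ (n - j) * n.choose j) *
        (Real.exp ((j * w + 0) * s) *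
          ∏ l ∈ range r, phi ((j * (α l : ℝ) + ((h : ℝ) - l)) * s))) := by
    intro j hj
    have hjn : j ≤ n := by have := mem_range.1 hj; omega
    have hp : ∏ l ∈ Finset.range r,
          (((j : ℤ) * α l + h - l : ℤ) : ℝ) / qint (Real.exp s) ((j : ℤ) * α l + h - l)
        = κ ^ r * ∏ l ∈ range r, phi ((j * (α l : ℝ) + ((h : ℝ) - l)) * s) := by
      rw [← Finset.card_range r, ← Finset.prod_const, Finset.card_range, ← Finset.prod_mul_distrib]
      refine Finset.prod_congr rfl fun l hl => ?_
      have hm := hnz j hjn l hl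
      generalize hmm : (j : ℤ) * α l + h - l = m at hm
      have hmr : (j * (α l : ℝ) + ((h : ℝ) - l)) = m := by rw [← hmm]; push_cast; ring
      have hm0 : (m : ℝ) ≠ 0 := by exact_mod_cast hm
      have hms : (m : ℝ) * s ≠ 0 := mul_ne_zero hm0 hs
      have hem : Real.exp (m * s) - 1 ≠ 0 := by
        rw [sub_ne_zero]; simpa using hms
      have hem' : 1 - Real.exp (m * s) ≠ 0 := by
        rw [← neg_ne_zero, neg_sub]; exact hem
      have hzp : Real.exp s ^ m = Real.exp (m * s) := by
        rw [mul_comm, Real.exp_mul, Real.rpow_intCast]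
      rw [hmr, phi_of_ne hms, qint, h1, hzp]
      rw [show 1 - Real.exp (m * s) = -(Real.exp (m * s) - 1) by ring, neg_div_neg_eq]
      field_simp
    rw [hp, neg_pow, ← pow_mul, ← Real.exp_nat_mul]
    have hsgn : (-1 : ℝ) ^ j = (-1) ^ n * (-1) ^ (n - j) := by
      rw [← pow_add, show n + (n - j) = 2 * (n - j) + j by omega, pow_add, pow_mul]; simp
    rw [hsgn, show ((w * j : ℕ) : ℝ) * s = ((j : ℝ) * w + 0) * s by push_cast; ring]
    ring
  rw [Finset.sum_congr rfl hterm, ← Finset.mul_sum, neg_pow, mul_pow]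
  have : ((-1 : ℝ) ^ n) ≠ 0 := by simp
  generalize (∑ j ∈ range (n + 1), _ : ℝ) = S
  field_simp

theorem changhee_tendsto_barnes (h : ℤ) (r : ℕ) (hr : 1 ≤ r)
    (α : ℕ → ℤ) (hα : ∀ l ∈ Finset.range r, 0 < α l)
    (n : ℕ)
    (hnz : ∀ j : ℕ, j ≤ n → ∀ l ∈ Finset.range r, (j : ℤ) * α l + h - l ≠ 0)
    (B : ℕ → ℝ → ℝ) (ε : ℝ) (hε : 0 < ε)
    (hB : ∀ x t : ℝ, t ≠ 0 → |t| < ε →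
      HasSum (fun m : ℕ => B m x * t ^ m / m.factorial)
        ((∏ j ∈ Finset.range r, (α j : ℝ) * t / (Real.exp ((α j : ℝ) * t) - 1)) *
          Real.exp (x * t)))
    (w : ℕ) :
    Tendsto (fun q : ℝ => changheeBetaPoly q h r α w n)
      (nhdsWithin 1 (Set.Ioo 0 1)) (nhds (B n w)) := by
  have hφ0 := TE_of_analytic (n + 1) analyticAt_phi
  have he0 := TE_of_analytic (n + 1) (analyticAt_rexp (x := (0 : ℝ)))
  obtain ⟨c, hc⟩ := hφ0
  obtain ⟨d, hd⟩ := he0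
  obtain ⟨P, hdeg, hg, hg0⟩ := Fam.prod r hc hd w (fun l => (α l : ℝ)) (fun l => (h : ℝ) - l)
  -- identify the leading coefficient
  have hBn : (P n).coeff n = B n w / n.factorial := by
    have hT : TE (n + 1) (fun t => ∑' m : ℕ, t ^ m * (B m w / m.factorial))
        (fun m => B m w / m.factorial) := by
      refine TE_of_hasSum _ ?_
      filter_upwards [Metric.ball_mem_nhds (0 : ℝ) hε] with t ht
      apply Summable.hasSum
      by_cases h0 : t = 0
      · subst h0
        refine summable_of_ne_finset_zero (s := {0}) fun m hm => ?_
        have : m ≠ 0 := by simpa using hm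
        simp [this]
      · refine (hB w t h0 (by simpa using ht)).summable.congr fun m => ?_
        ring
    refine TE.unique hg0 hT ?_ n (Nat.lt_succ_self n)
    filter_upwards [self_mem_nhdsWithin, mem_nhdsWithin_of_mem_nhds
      (Metric.ball_mem_nhds (0 : ℝ) hε)] with t ht0 ht
    have ht0 : t ≠ 0 := ht0
    have h1 := hB w t ht0 (by simpa using ht)
    have h2 : (fun m : ℕ => B m w * t ^ m / m.factorial)
        = fun m : ℕ => t ^ m * (B m w / m.factorial) := by
      funext m; ring
    rw [h2] at h1
    rw [h1.tsum_eq, mul_comm]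
    congr 1
    refine Finset.prod_congr rfl fun l hl => ?_
    have : (α l : ℝ) ≠ 0 := by exact_mod_cast (hα l hl).ne'
    exact phi_of_ne (mul_ne_zero this ht0)
  have hS := (TE.sum (range (n + 1)) (fun j => (-1 : ℝ) ^ (n - j) * n.choose j) hg).tendsto
    (Nat.lt_succ_self n) fun k hk => diff_lt ((hdeg k).trans_lt hk)
  rw [diff_eq (hdeg n), hBn, div_mul_cancel₀ _ (by positivity)] at hS
  have hκ : Tendsto (fun s : ℝ => (Real.exp s - 1) / s) (𝓝[≠] 0) (𝓝 1) := by
    have := (Real.hasDerivAt_exp 0).tendsto_slope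
    rw [Real.exp_zero] at this
    refine this.congr fun s => ?_
    simp [slope_def_field]
  have hmain : Tendsto (fun s => changheeBetaPoly (Real.exp s) h r α w n) (𝓝[≠] 0)
      (𝓝 (B n w)) := by
    have h1 := ((hκ.pow r).div (hκ.pow n) (by simp)).mul hS
    simp only [one_pow, div_one, one_mul] at h1
    refine h1.congr' ?_
    filter_upwards [self_mem_nhdsWithin] with s hs
    exact (changhee_exp h r α n hnz w hs).symm
  have hlog : Tendsto Real.log (nhdsWithin 1 (Set.Ioo 0 1)) (𝓝[≠] 0) := by
    refine tendsto_nhdsWithin_iff.2 ⟨?_, ?_⟩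
    · have := (Real.continuousAt_log one_ne_zero).tendsto
      rw [Real.log_one] at this
      exact this.mono_left nhdsWithin_le_nhds
    · filter_upwards [self_mem_nhdsWithin] with q hq
      exact (Real.log_neg hq.1 hq.2).ne
  refine (hmain.comp hlog).congr' ?_
  filter_upwards [self_mem_nhdsWithin] with q hq
  simp [Real.exp_log hq.1]
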